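/- Let 0 < s < 1 and ε > 0. There exists a constant C > 0, depending only on s and ε, such that for all δ > 0, T > 0, η ∈ ℝ³ and t ∈ [0, T], the map ξ ↦ M(t, ξ) is differentiable on ℝ³ and |∇_ξ M(t, ξ)| ≤ C (⟨ξ⟩ + (T − t)|η|)^{−1} M(t, ξ) for every ξ ∈ ℝ³. -/

import Mathlib

open MeasureTheory

/-- The symbol `M(t,ξ) = (1 + δ ∫₀^{T−t} ⟨ξ − τη⟩^{2s} dτ)^{−1/2−ε}`. -/
noncomputable def symbM (s ε δ T : ℝ) (η : EuclideanSpace ℝ (Fin 3)) (t : ℝ)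
    (ξ : EuclideanSpace ℝ (Fin 3)) : ℝ :=
  (1 + δ * ∫ τ in (0 : ℝ)..(T - t), Real.sqrt (1 + ‖ξ - τ • η‖ ^ 2) ^ (2 * s)) ^
    (-(1 / 2 : ℝ) - ε)

/-!
Write `⟨x⟩ = √(1 + ‖x‖²)`, `r = 2s` and `I_p = ∫₀ᴸ ⟨ξ - τη⟩ᵖ dτ` with `L = T - t`. Since
`|∇⟨x⟩ʳ| ≤ r ⟨x⟩ʳ⁻¹`, logarithmic differentiation reduces the claim to `A I_{r-1} ≲ I_r`, where
`A = ⟨ξ⟩ + L‖η‖`. If `A ≥ 3L‖η‖`, then `A ≤ 3⟨ξ - τη⟩` along the whole segment and the estimate is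
pointwise. Otherwise `A` is comparable to `L‖η‖`. In that case
`d/dτ (⟪ξ - τη, -η⟫ ⟨ξ - τη⟩ʳ⁻¹) ≥ min(1, r) ‖η‖² ⟨ξ - τη⟩ʳ⁻¹` integrates to
`min(1, r) ‖η‖ I_{r-1} ≤ 2Aʳ`, while `I_r ≳ L (L‖η‖)ʳ` because, of any two points `ξ - τη` at
parameter distance `L/2`, one has norm at least `L‖η‖/4`.
-/

/-- The Japanese bracket `⟨x⟩ = (1 + ‖x‖²)^{1/2}`. -/
noncomputable def japaneseBracket {E : Type*} [NormedAddCommGroup E] (x : E) : ℝ :=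
  √(1 + ‖x‖ ^ 2)

/-- The integral `∫₀ᴸ ⟨ξ − τη⟩ʳ dτ` of a power of the Japanese bracket along a segment; the paper's
symbol uses `r = 2s` and `L = T − t`. -/
noncomputable def bracketIntegral {E : Type*} [NormedAddCommGroup E] [NormedSpace ℝ E]
    (r L : ℝ) (η ξ : E) : ℝ :=
  ∫ τ in (0 : ℝ)..L, japaneseBracket (ξ - τ • η) ^ r

/-- The symbol `(1 + δ ∫₀ᴸ ⟨ξ − τη⟩ʳ dτ)ᵖ` with arbitrary exponents; `symbM` is the case `r = 2s`,
`p = −1/2 − ε`, `L = T − t`. -/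
noncomputable def bracketSymbol {E : Type*} [NormedAddCommGroup E] [NormedSpace ℝ E]
    (r p δ L : ℝ) (η ξ : E) : ℝ :=
  (1 + δ * bracketIntegral r L η ξ) ^ p

section Normed

variable {E : Type*} [NormedAddCommGroup E]

lemma japaneseBracket_sq (x : E) : japaneseBracket x ^ 2 = 1 + ‖x‖ ^ 2 :=
  Real.sq_sqrt (by positivity)

lemma japaneseBracket_pos (x : E) : 0 < japaneseBracket x :=
  Real.sqrt_pos.2 (by positivity)

lemma one_le_japaneseBracket (x : E) : 1 ≤ japaneseBracket x :=
  Real.one_le_sqrt.2 (by linarith [sq_nonneg ‖x‖])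

lemma norm_le_japaneseBracket (x : E) : ‖x‖ ≤ japaneseBracket x :=
  Real.le_sqrt_of_sq_le (by linarith)

@[fun_prop]
lemma continuous_japaneseBracket : Continuous (japaneseBracket : E → ℝ) := by
  unfold japaneseBracket
  fun_prop

@[fun_prop]
lemma continuous_japaneseBracket_rpow (r : ℝ) : Continuous fun x : E ↦ japaneseBracket x ^ r :=
  continuous_japaneseBracket.rpow_const fun x ↦ .inl (japaneseBracket_pos x).ne'

lemma japaneseBracket_le_add_norm_sub (x y : E) :
    japaneseBracket x ≤ japaneseBracket y + ‖x - y‖ := by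
  have hy := japaneseBracket_pos y
  refine Real.sqrt_le_iff.2 ⟨by positivity, ?_⟩
  calc 1 + ‖x‖ ^ 2 ≤ 1 + (‖y‖ + ‖x - y‖) ^ 2 := by gcongr; exact norm_le_norm_add_norm_sub' x y
    _ = japaneseBracket y ^ 2 + 2 * ‖y‖ * ‖x - y‖ + ‖x - y‖ ^ 2 := by
        rw [japaneseBracket_sq]; ring
    _ ≤ japaneseBracket y ^ 2 + 2 * japaneseBracket y * ‖x - y‖ + ‖x - y‖ ^ 2 := by
        gcongr; exact norm_le_japaneseBracket y
    _ = (japaneseBracket y + ‖x - y‖) ^ 2 := by ring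

variable [NormedSpace ℝ E]

lemma norm_smul_le_of_mem_Icc {τ L : ℝ} (hτ : τ ∈ Set.Icc 0 L) (η : E) :
    ‖τ • η‖ ≤ L * ‖η‖ := by
  rw [norm_smul, Real.norm_of_nonneg hτ.1]
  gcongr
  exact hτ.2

lemma japaneseBracket_sub_smul_le {τ L : ℝ} (hτ : τ ∈ Set.Icc 0 L) (η ξ : E) :
    japaneseBracket (ξ - τ • η) ≤ japaneseBracket ξ + L * ‖η‖ := by
  have h := japaneseBracket_le_add_norm_sub (ξ - τ • η) ξ
  rw [sub_sub_cancel_left, norm_neg] at h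
  linarith [norm_smul_le_of_mem_Icc hτ η]

lemma japaneseBracket_le_sub_smul_add {τ L : ℝ} (hτ : τ ∈ Set.Icc 0 L) (η ξ : E) :
    japaneseBracket ξ ≤ japaneseBracket (ξ - τ • η) + L * ‖η‖ := by
  have h := japaneseBracket_le_add_norm_sub ξ (ξ - τ • η)
  rw [sub_sub_cancel] at h
  linarith [norm_smul_le_of_mem_Icc hτ η]

lemma continuous_japaneseBracket_sub_smul_rpow (r : ℝ) (η ξ : E) :
    Continuous fun τ : ℝ ↦ japaneseBracket (ξ - τ • η) ^ r :=
  (continuous_japaneseBracket_rpow r).comp (by fun_prop)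

lemma bracketIntegral_nonneg {L : ℝ} (hL : 0 ≤ L) (r : ℝ) (η ξ : E) :
    0 ≤ bracketIntegral r L η ξ :=
  intervalIntegral.integral_nonneg hL fun τ _ ↦
    Real.rpow_nonneg (japaneseBracket_pos (ξ - τ • η)).le r

lemma bracketIntegral_eq_integral_half (r L : ℝ) (η ξ : E) :
    bracketIntegral r L η ξ = ∫ τ in (0 : ℝ)..L / 2,
      (japaneseBracket (ξ - τ • η) ^ r + japaneseBracket (ξ - (τ + L / 2) • η) ^ r) := by
  have hcont := continuous_japaneseBracket_sub_smul_rpow r η ξ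
  have hshift : Continuous fun τ : ℝ ↦ japaneseBracket (ξ - (τ + L / 2) • η) ^ r :=
    hcont.comp (continuous_add_const _)
  rw [intervalIntegral.integral_add (hcont.intervalIntegrable _ _)
      (hshift.intervalIntegrable _ _),
    intervalIntegral.integral_comp_add_right
      (fun τ ↦ japaneseBracket (ξ - τ • η) ^ r), zero_add, add_halves,
    intervalIntegral.integral_add_adjacent_intervals (hcont.intervalIntegrable _ _)
      (hcont.intervalIntegrable _ _), bracketIntegral]

lemma rpow_le_japaneseBracket_rpow_add {r L : ℝ} (hr : 0 ≤ r) (hL : 0 ≤ L) (η x : E) :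
    (L * ‖η‖ / 4) ^ r ≤ japaneseBracket x ^ r + japaneseBracket (x - (L / 2) • η) ^ r := by
  set y := x - (L / 2) • η with hy
  have hx_nonneg := Real.rpow_nonneg (japaneseBracket_pos x).le r
  have hy_nonneg := Real.rpow_nonneg (japaneseBracket_pos y).le r
  have hxy : L * ‖η‖ / 2 ≤ ‖x‖ + ‖y‖ := by
    have h := norm_sub_le x y
    rwa [hy, sub_sub_cancel, norm_smul, Real.norm_of_nonneg (by positivity),
      ← mul_div_right_comm] at h
  rcases le_total (L * ‖η‖ / 4) ‖x‖ with hx | hx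
  · have := Real.rpow_le_rpow (by positivity) (hx.trans (norm_le_japaneseBracket x)) hr
    linarith
  · have hy : L * ‖η‖ / 4 ≤ ‖y‖ := by linarith
    have := Real.rpow_le_rpow (by positivity) (hy.trans (norm_le_japaneseBracket y)) hr
    linarith

lemma half_mul_rpow_le_bracketIntegral {r L : ℝ} (hr : 0 ≤ r) (hL : 0 ≤ L) (η ξ : E) :
    L / 2 * (L * ‖η‖ / 4) ^ r ≤ bracketIntegral r L η ξ := by
  have hcont := continuous_japaneseBracket_sub_smul_rpow r η ξ
  rw [bracketIntegral_eq_integral_half]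
  calc L / 2 * (L * ‖η‖ / 4) ^ r = ∫ _ in (0 : ℝ)..L / 2, (L * ‖η‖ / 4) ^ r := by simp
    _ ≤ _ := by
      refine intervalIntegral.integral_mono_on (by positivity)
        (continuous_const.intervalIntegrable _ _)
        ((hcont.add (hcont.comp (continuous_add_const _))).intervalIntegrable _ _) fun τ _ ↦ ?_
      simpa only [add_smul, sub_sub] using rpow_le_japaneseBracket_rpow_add hr hL η (ξ - τ • η)

lemma mul_bracketIntegral_sub_one_le {K L : ℝ} (hL : 0 ≤ L) (r : ℝ) {η ξ : E}
    (hK : ∀ τ ∈ Set.Icc 0 L, K ≤ japaneseBracket (ξ - τ • η)) :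
    K * bracketIntegral (r - 1) L η ξ ≤ bracketIntegral r L η ξ := by
  rw [bracketIntegral, ← intervalIntegral.integral_const_mul]
  refine intervalIntegral.integral_mono_on hL
    (((continuous_japaneseBracket_sub_smul_rpow _ η ξ).const_mul K).intervalIntegrable _ _)
    ((continuous_japaneseBracket_sub_smul_rpow r η ξ).intervalIntegrable _ _) fun τ hτ ↦ ?_
  have hpos := japaneseBracket_pos (ξ - τ • η)
  calc K * japaneseBracket (ξ - τ • η) ^ (r - 1)
      ≤ japaneseBracket (ξ - τ • η) * japaneseBracket (ξ - τ • η) ^ (r - 1) := by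
        gcongr; exact hK τ hτ
    _ = japaneseBracket (ξ - τ • η) ^ r := by
        rw [mul_comm, ← Real.rpow_add_one hpos.ne', sub_add_cancel]

end Normed

section Inner

variable {E : Type*} [NormedAddCommGroup E] [InnerProductSpace ℝ E]

lemma hasFDerivAt_japaneseBracket_rpow (r : ℝ) (x : E) :
    HasFDerivAt (fun y : E ↦ japaneseBracket y ^ r)
      ((r * japaneseBracket x ^ (r - 2)) • innerSL ℝ x) x := by
  have hrpow (y : E) (a : ℝ) : japaneseBracket y ^ (2 * a) = (1 + ‖y‖ ^ 2) ^ a := by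
    rw [Real.rpow_mul (japaneseBracket_pos y).le, Real.rpow_two, japaneseBracket_sq]
  have hexp : 2 * (r / 2 - 1) = r - 2 := by ring
  have h := ((hasFDerivAt_id x).norm_sq.const_add 1).rpow_const (p := r / 2)
    (.inl (by positivity : 1 + ‖x‖ ^ 2 ≠ 0))
  convert h using 1
  · funext y
    rw [id, ← hrpow, mul_div_cancel₀ r two_ne_zero]
  · ext v
    simp only [smul_apply, innerSL_apply_apply, smul_eq_mul, id, ← hrpow, hexp,
      ContinuousLinearMap.comp_id, nsmul_eq_mul, Nat.cast_ofNat]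
    ring

lemma norm_fderiv_japaneseBracket_rpow_le (r : ℝ) (x : E) :
    ‖fderiv ℝ (fun y : E ↦ japaneseBracket y ^ r) x‖ ≤ |r| * japaneseBracket x ^ (r - 1) := by
  have hpos := japaneseBracket_pos x
  rw [(hasFDerivAt_japaneseBracket_rpow r x).fderiv, norm_smul, innerSL_apply_norm, norm_mul,
    Real.norm_eq_abs, Real.norm_of_nonneg (by positivity), mul_assoc]
  gcongr
  calc japaneseBracket x ^ (r - 2) * ‖x‖ ≤ japaneseBracket x ^ (r - 2) * japaneseBracket x := by
        gcongr; exact norm_le_japaneseBracket x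
    _ = japaneseBracket x ^ (r - 1) := by
        rw [← Real.rpow_add_one hpos.ne']; ring_nf

lemma hasDerivAt_inner_mul_japaneseBracket_rpow (r : ℝ) (η ξ : E) (τ : ℝ) :
    HasDerivAt (fun σ : ℝ ↦ inner ℝ (ξ - σ • η) (-η) * japaneseBracket (ξ - σ • η) ^ r)
      (‖η‖ ^ 2 * japaneseBracket (ξ - τ • η) ^ r +
        r * inner ℝ (ξ - τ • η) (-η) ^ 2 * japaneseBracket (ξ - τ • η) ^ (r - 2)) τ := by
  have hline : HasDerivAt (fun σ : ℝ ↦ ξ - σ • η) (-η) τ := by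
    simpa using ((hasDerivAt_id τ).smul_const η).const_sub ξ
  have hinner := hline.inner ℝ (hasDerivAt_const τ (-η))
  have hpow := (hasFDerivAt_japaneseBracket_rpow r (ξ - τ • η)).comp_hasDerivAt τ hline
  refine (hinner.mul hpow).congr_deriv ?_
  rw [inner_zero_right, zero_add, real_inner_self_eq_norm_sq, norm_neg, Function.comp_apply,
    smul_apply, innerSL_apply_apply, smul_eq_mul]
  ring

lemma min_mul_norm_sq_mul_rpow_le (r : ℝ) (v x : E) :
    min 1 r * ‖v‖ ^ 2 * japaneseBracket x ^ (r - 1) ≤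
      ‖v‖ ^ 2 * japaneseBracket x ^ (r - 1) +
        (r - 1) * inner ℝ x v ^ 2 * japaneseBracket x ^ (r - 1 - 2) := by
  have hpos := japaneseBracket_pos x
  have hinner : inner ℝ x v ^ 2 ≤ ‖v‖ ^ 2 * japaneseBracket x ^ 2 := by
    rw [← mul_pow, sq_le_sq, abs_of_nonneg (a := ‖v‖ * _) (by positivity), mul_comm]
    exact (abs_real_inner_le_norm x v).trans (by gcongr; exact norm_le_japaneseBracket x)
  have hsplit : japaneseBracket x ^ (r - 1) =
      japaneseBracket x ^ 2 * japaneseBracket x ^ (r - 1 - 2) := by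
    rw [mul_comm, ← Real.rpow_natCast, ← Real.rpow_add hpos]
    norm_num
  have hcoeff : min 1 r * (‖v‖ ^ 2 * japaneseBracket x ^ 2) ≤
      ‖v‖ ^ 2 * japaneseBracket x ^ 2 + (r - 1) * inner ℝ x v ^ 2 := by
    rcases le_total 1 r with hr | hr
    · rw [min_eq_left hr]
      nlinarith [sq_nonneg (inner ℝ x v)]
    · rw [min_eq_right hr]
      nlinarith
  rw [hsplit]
  calc _ = min 1 r * (‖v‖ ^ 2 * japaneseBracket x ^ 2) * japaneseBracket x ^ (r - 1 - 2) := by ring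
    _ ≤ (‖v‖ ^ 2 * japaneseBracket x ^ 2 + (r - 1) * inner ℝ x v ^ 2) *
        japaneseBracket x ^ (r - 1 - 2) := by gcongr
    _ = _ := by ring

lemma abs_inner_mul_japaneseBracket_rpow_le (r : ℝ) (v x : E) :
    |inner ℝ x v * japaneseBracket x ^ (r - 1)| ≤ ‖v‖ * japaneseBracket x ^ r := by
  have hpos := japaneseBracket_pos x
  rw [abs_mul, abs_of_pos (a := _ ^ _) (by positivity)]
  calc |inner ℝ x v| * japaneseBracket x ^ (r - 1)
      ≤ japaneseBracket x * ‖v‖ * japaneseBracket x ^ (r - 1) := by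
        gcongr
        exact (abs_real_inner_le_norm x v).trans (by gcongr; exact norm_le_japaneseBracket x)
    _ = ‖v‖ * (japaneseBracket x ^ (r - 1) * japaneseBracket x) := by ring
    _ = ‖v‖ * japaneseBracket x ^ r := by
        rw [← Real.rpow_add_one hpos.ne', sub_add_cancel]

lemma min_mul_norm_mul_bracketIntegral_le {L : ℝ} (hL : 0 ≤ L) (r : ℝ) (η ξ : E) :
    min 1 r * ‖η‖ * bracketIntegral (r - 1) L η ξ ≤
      japaneseBracket ξ ^ r + japaneseBracket (ξ - L • η) ^ r := by
  have hξ := japaneseBracket_pos ξ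
  have hξL := japaneseBracket_pos (ξ - L • η)
  rcases (norm_nonneg η).eq_or_lt with hη | hη
  · rw [← hη, mul_zero, zero_mul]
    positivity
  have hcont (a : ℝ) := continuous_japaneseBracket_sub_smul_rpow a η ξ
  have hderiv_cont : Continuous fun τ : ℝ ↦ ‖η‖ ^ 2 * japaneseBracket (ξ - τ • η) ^ (r - 1) +
      (r - 1) * inner ℝ (ξ - τ • η) (-η) ^ 2 * japaneseBracket (ξ - τ • η) ^ (r - 1 - 2) :=
    (hcont _).const_mul _ |>.add (.mul (by fun_prop) (hcont _))
  have hFTC := intervalIntegral.integral_eq_sub_of_hasDerivAt (a := 0) (b := L)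
    (fun τ _ ↦ hasDerivAt_inner_mul_japaneseBracket_rpow (r - 1) η ξ τ)
    (hderiv_cont.intervalIntegrable _ _)
  have hmono := intervalIntegral.integral_mono_on (μ := volume) hL
    (((hcont (r - 1)).const_mul (min 1 r * ‖η‖ ^ 2)).intervalIntegrable _ _)
    (hderiv_cont.intervalIntegrable _ _)
    fun τ _ ↦ norm_neg η ▸ min_mul_norm_sq_mul_rpow_le r (-η) (ξ - τ • η)
  rw [intervalIntegral.integral_const_mul, hFTC, zero_smul, sub_zero, ← bracketIntegral] at hmono
  have hstart := abs_inner_mul_japaneseBracket_rpow_le r (-η) ξ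
  have hend := abs_inner_mul_japaneseBracket_rpow_le r (-η) (ξ - L • η)
  rw [norm_neg, abs_le] at hstart hend
  refine le_of_mul_le_mul_left ?_ hη
  linarith [hstart.1, hend.2]

lemma mul_min_mul_bracketIntegral_sub_one_le_of_le {r L : ℝ} (hr : 0 ≤ r) (hL : 0 ≤ L) {η ξ : E}
    (h : japaneseBracket ξ + L * ‖η‖ ≤ 3 * (L * ‖η‖)) :
    (japaneseBracket ξ + L * ‖η‖) * (min 1 r * bracketIntegral (r - 1) L η ξ) ≤
      12 ^ (r + 1) * bracketIntegral r L η ξ := by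
  set A := japaneseBracket ξ + L * ‖η‖
  have hξ := japaneseBracket_pos ξ
  have hA_pos : 0 < A := by positivity
  have hI := bracketIntegral_nonneg hL (r - 1) η ξ
  have hend {τ : ℝ} (hτ : τ ∈ Set.Icc 0 L) : japaneseBracket (ξ - τ • η) ^ r ≤ A ^ r :=
    Real.rpow_le_rpow (japaneseBracket_pos _).le (japaneseBracket_sub_smul_le hτ η ξ) hr
  have hupper : min 1 r * ‖η‖ * bracketIntegral (r - 1) L η ξ ≤ 2 * A ^ r := by
    have hstart := hend ⟨le_rfl, hL⟩
    rw [zero_smul, sub_zero] at hstart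
    linarith [min_mul_norm_mul_bracketIntegral_le hL r η ξ, hend ⟨hL, le_rfl⟩]
  have hA_rpow : A ^ r ≤ 12 ^ r * (L * ‖η‖ / 4) ^ r := by
    rw [← Real.mul_rpow (by norm_num) (by positivity)]
    exact Real.rpow_le_rpow hA_pos.le (by linarith) hr
  calc A * (min 1 r * bracketIntegral (r - 1) L η ξ)
      ≤ 3 * (L * ‖η‖) * (min 1 r * bracketIntegral (r - 1) L η ξ) := by gcongr
    _ = 3 * L * (min 1 r * ‖η‖ * bracketIntegral (r - 1) L η ξ) := by ring
    _ ≤ 3 * L * (2 * A ^ r) := by gcongr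
    _ ≤ 3 * L * (2 * (12 ^ r * (L * ‖η‖ / 4) ^ r)) := by gcongr
    _ = 12 ^ (r + 1) * (L / 2 * (L * ‖η‖ / 4) ^ r) := by
        rw [Real.rpow_add_one (by norm_num)]; ring
    _ ≤ 12 ^ (r + 1) * bracketIntegral r L η ξ := by
        gcongr; exact half_mul_rpow_le_bracketIntegral hr hL η ξ

lemma mul_min_mul_bracketIntegral_sub_one_le {r L : ℝ} (hr : 0 ≤ r) (hL : 0 ≤ L) (η ξ : E) :
    (japaneseBracket ξ + L * ‖η‖) * (min 1 r * bracketIntegral (r - 1) L η ξ) ≤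
      12 ^ (r + 1) * bracketIntegral r L η ξ := by
  rcases le_total (japaneseBracket ξ + L * ‖η‖) (3 * (L * ‖η‖)) with h | h
  · exact mul_min_mul_bracketIntegral_sub_one_le_of_le hr hL h
  have hξ := japaneseBracket_pos ξ
  have hI := bracketIntegral_nonneg hL (r - 1) η ξ
  have hI' := bracketIntegral_nonneg hL r η ξ
  have hlower : ∀ τ ∈ Set.Icc 0 L,
      (japaneseBracket ξ + L * ‖η‖) / 3 ≤ japaneseBracket (ξ - τ • η) := fun τ hτ ↦ by
    linarith [japaneseBracket_le_sub_smul_add hτ η ξ]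
  have h12 : (3 : ℝ) ≤ 12 ^ (r + 1) := by
    linarith [Real.self_le_rpow_of_one_le (x := 12) (by norm_num) (le_add_of_nonneg_left hr)]
  calc (japaneseBracket ξ + L * ‖η‖) * (min 1 r * bracketIntegral (r - 1) L η ξ)
      ≤ (japaneseBracket ξ + L * ‖η‖) * (1 * bracketIntegral (r - 1) L η ξ) := by
        gcongr; exact min_le_left 1 r
    _ ≤ 3 * bracketIntegral r L η ξ := by
        linarith [mul_bracketIntegral_sub_one_le hL r hlower]
    _ ≤ 12 ^ (r + 1) * bracketIntegral r L η ξ := by gcongr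

lemma hasFDerivAt_bracketIntegral {L : ℝ} (hL : 0 ≤ L) (r : ℝ) (η ξ : E) :
    HasFDerivAt (bracketIntegral r L η)
      (∫ τ in (0 : ℝ)..L, fderiv ℝ (fun y : E ↦ japaneseBracket y ^ r) (ξ - τ • η)) ξ := by
  have hcont (x : E) := continuous_japaneseBracket_sub_smul_rpow r η x
  refine intervalIntegral.hasFDerivAt_integral_of_dominated_of_fderiv_le (μ := volume)
    (𝕜 := ℝ) (F := fun x τ ↦ japaneseBracket (x - τ • η) ^ r)
    (F' := fun x τ ↦ fderiv ℝ (fun y : E ↦ japaneseBracket y ^ r) (x - τ • η))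
    (bound := fun _ ↦ |r| * (japaneseBracket ξ + 1 + L * ‖η‖) ^ |r|)
    (Metric.ball_mem_nhds ξ one_pos) (.of_forall fun x ↦ (hcont x).aestronglyMeasurable)
    ((hcont ξ).intervalIntegrable _ _) ?_ ?_ (continuous_const.intervalIntegrable _ _) ?_
  · simp_rw [fun x : E ↦ (hasFDerivAt_japaneseBracket_rpow r x).fderiv]
    have := continuous_japaneseBracket_sub_smul_rpow (r - 2) η ξ
    exact Continuous.aestronglyMeasurable (by fun_prop)
  · refine .of_forall fun τ hτ x hx ↦ ?_
    rw [Set.uIoc_of_le hL] at hτ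
    have hle : japaneseBracket (x - τ • η) ≤ japaneseBracket ξ + 1 + L * ‖η‖ := by
      rw [Metric.mem_ball, dist_eq_norm] at hx
      linarith [japaneseBracket_sub_smul_le (Set.Ioc_subset_Icc_self hτ) η x,
        japaneseBracket_le_add_norm_sub x ξ]
    calc _ ≤ |r| * japaneseBracket (x - τ • η) ^ (r - 1) :=
          norm_fderiv_japaneseBracket_rpow_le r (x - τ • η)
      _ ≤ |r| * japaneseBracket (x - τ • η) ^ |r| := by
          gcongr
          · exact one_le_japaneseBracket _
          · linarith [le_abs_self r]
      _ ≤ |r| * (japaneseBracket ξ + 1 + L * ‖η‖) ^ |r| := by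
          have := japaneseBracket_pos (x - τ • η)
          gcongr
  · refine .of_forall fun τ _ x _ ↦ ?_
    have h := (hasFDerivAt_japaneseBracket_rpow r (x - τ • η)).differentiableAt.hasFDerivAt
    exact h.comp x ((hasFDerivAt_id x).sub_const (τ • η))

lemma norm_fderiv_bracketIntegral_le {L : ℝ} (hL : 0 ≤ L) (r : ℝ) (η ξ : E) :
    ‖fderiv ℝ (bracketIntegral r L η) ξ‖ ≤ |r| * bracketIntegral (r - 1) L η ξ := by
  rw [(hasFDerivAt_bracketIntegral hL r η ξ).fderiv, bracketIntegral,
    ← intervalIntegral.integral_const_mul]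
  exact intervalIntegral.norm_integral_le_of_norm_le hL
    (.of_forall fun τ _ ↦ norm_fderiv_japaneseBracket_rpow_le r (ξ - τ • η))
    (((continuous_japaneseBracket_sub_smul_rpow _ η ξ).const_mul |r|).intervalIntegrable _ _)

lemma norm_fderiv_bracketIntegral_le_inv_mul {r L : ℝ} (hr : 0 ≤ r) (hL : 0 ≤ L) (η ξ : E) :
    ‖fderiv ℝ (bracketIntegral r L η) ξ‖ ≤
      max 1 r * 12 ^ (r + 1) * (japaneseBracket ξ + L * ‖η‖)⁻¹ * bracketIntegral r L η ξ := by
  have hξ := japaneseBracket_pos ξ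
  have hmin : min 1 r * bracketIntegral (r - 1) L η ξ ≤
      (japaneseBracket ξ + L * ‖η‖)⁻¹ * (12 ^ (r + 1) * bracketIntegral r L η ξ) := by
    rw [le_inv_mul_iff₀ (by positivity)]
    exact mul_min_mul_bracketIntegral_sub_one_le hr hL η ξ
  calc ‖fderiv ℝ (bracketIntegral r L η) ξ‖ ≤ |r| * bracketIntegral (r - 1) L η ξ :=
        norm_fderiv_bracketIntegral_le hL r η ξ
    _ = max 1 r * (min 1 r * bracketIntegral (r - 1) L η ξ) := by
        rw [abs_of_nonneg hr, ← mul_assoc, max_mul_min, one_mul]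
    _ ≤ max 1 r * ((japaneseBracket ξ + L * ‖η‖)⁻¹ *
          (12 ^ (r + 1) * bracketIntegral r L η ξ)) :=
        mul_le_mul_of_nonneg_left hmin (by positivity)
    _ = _ := by ring

end Inner

lemma norm_fderiv_one_add_mul_rpow_le {E : Type*} [NormedAddCommGroup E] [NormedSpace ℝ E]
    {f : E → ℝ} {x : E} {δ κ : ℝ} (p : ℝ) (hf : DifferentiableAt ℝ f x) (hδ : 0 ≤ δ)
    (hκ : 0 ≤ κ) (hfx : 0 ≤ f x) (hbound : ‖fderiv ℝ f x‖ ≤ κ * f x) :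
    ‖fderiv ℝ (fun y ↦ (1 + δ * f y) ^ p) x‖ ≤ |p| * κ * (1 + δ * f x) ^ p := by
  have hpos : 0 < 1 + δ * f x := by positivity
  have hderiv := ((hf.hasFDerivAt.const_mul δ).const_add 1).rpow_const (p := p) (.inl hpos.ne')
  rw [hderiv.fderiv, norm_smul, norm_smul, norm_mul, Real.norm_eq_abs, Real.norm_of_nonneg hδ,
    Real.norm_of_nonneg (by positivity)]
  have hscaled : δ * ‖fderiv ℝ f x‖ ≤ κ * (1 + δ * f x) :=
    calc δ * ‖fderiv ℝ f x‖ ≤ δ * (κ * f x) := by gcongr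
      _ ≤ κ * (1 + δ * f x) := by linarith
  calc |p| * (1 + δ * f x) ^ (p - 1) * (δ * ‖fderiv ℝ f x‖)
      ≤ |p| * (1 + δ * f x) ^ (p - 1) * (κ * (1 + δ * f x)) := by
        gcongr
    _ = |p| * κ * ((1 + δ * f x) ^ (p - 1) * (1 + δ * f x)) := by ring
    _ = |p| * κ * (1 + δ * f x) ^ p := by
        rw [← Real.rpow_add_one hpos.ne', sub_add_cancel]

theorem stmt13_general {E : Type*} [NormedAddCommGroup E] [InnerProductSpace ℝ E]
    {r δ L : ℝ} (p : ℝ) (hr : 0 ≤ r) (hδ : 0 ≤ δ) (hL : 0 ≤ L) (η : E) :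
    Differentiable ℝ (bracketSymbol r p δ L η) ∧
      ∀ ξ : E, ‖fderiv ℝ (bracketSymbol r p δ L η) ξ‖ ≤
        |p| * (max 1 r * 12 ^ (r + 1)) * (japaneseBracket ξ + L * ‖η‖)⁻¹ *
          bracketSymbol r p δ L η ξ := by
  have hdiff (ξ : E) := (hasFDerivAt_bracketIntegral hL r η ξ).differentiableAt
  have hnonneg := bracketIntegral_nonneg hL r η
  refine ⟨fun ξ ↦ ?_, fun ξ ↦ ?_⟩
  · have hne : 1 + δ * bracketIntegral r L η ξ ≠ 0 := by
      have := hnonneg ξ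
      positivity
    exact (((hdiff ξ).const_mul δ).const_add 1).rpow_const (.inl hne)
  · have hξ := japaneseBracket_pos ξ
    rw [mul_assoc |p|]
    exact norm_fderiv_one_add_mul_rpow_le p (hdiff ξ) hδ (by positivity) (hnonneg ξ)
      (norm_fderiv_bracketIntegral_le_inv_mul hr hL η ξ)

theorem stmt13 (s ε : ℝ) (hs : s ∈ Set.Ioo (0 : ℝ) 1) (hε : 0 < ε) :
    ∃ C : ℝ, 0 < C ∧ ∀ δ T : ℝ, 0 < δ → 0 < T → ∀ η : EuclideanSpace ℝ (Fin 3),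
      ∀ t ∈ Set.Icc (0 : ℝ) T,
        Differentiable ℝ (symbM s ε δ T η t) ∧
          ∀ ξ : EuclideanSpace ℝ (Fin 3),
            ‖fderiv ℝ (symbM s ε δ T η t) ξ‖
              ≤ C * (Real.sqrt (1 + ‖ξ‖ ^ 2) + (T - t) * ‖η‖)⁻¹ * symbM s ε δ T η t ξ := by
  have hp : -(1 / 2 : ℝ) - ε ≠ 0 := by linarith
  exact ⟨_, by positivity, fun _ _ hδ _ η _ ht ↦
    stmt13_general _ (mul_nonneg zero_le_two hs.1.le) hδ.le (sub_nonneg.2 ht.2) η⟩
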